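/- Let 1 < p ≤ 2 with conjugate exponent p′, and let s, r ∈ ℝ satisfy s > −1/2 + 1/(2p), r ≥ |s|, r > 2/p − 1 and r ≤ 1 + s. Then there exist ε > 0, σ, ρ with 1/p < σ < 1 and 1/p < ρ < 1, and a constant C > 0, such that for each choice of sign ± and all measurable functions v₁, v₂, w : ℝ² → [0, ∞], ∫∫∫∫_{ℝ⁴} [v₁(ξ₁, τ₁) v₂(−ξ₂, −τ₂) w(ξ, τ)] / [⟨ξ₁⟩^{s} ⟨τ₁ + ξ₁⟩^{σ} ⟨ξ₂⟩^{s} ⟨τ₂ − ξ₂⟩^{σ} ⟨ξ⟩^{1−r} ⟨τ ± |ξ|⟩^{1−ρ−ε}] dξ₁ dτ₁ dξ₂ dτ₂ ≤ C · ‖v₁‖_{L^{p′}(ℝ²)} · ‖v₂‖_{L^{p′}(ℝ²)} · ‖w‖_{L^{p}(ℝ²)}, where ξ := ξ₁ + ξ₂ and τ := τ₁ + τ₂, all quantities understood in [0, ∞]. -/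

import Mathlib

/-!
The proof rests on two observations.

* **Transversality.** With `Φ = ⟨·⟩^{-γ}` and `γ > 1/p`, a single application of Hölder's inequality
  on `ℝ⁴`, pairing `v₁(ξ₁,τ₁) v₂(-ξ₂,-τ₂)` in `L^{p'}` against `w(ξ,τ) Φ(τ₁+ξ₁) Φ(τ₂-ξ₂)` in `L^p`,
  suffices: the first norm factors as `‖v₁‖ ‖v₂‖`, and the second one is computed by the linear
  change of variables `(ξ₁,τ₁,ξ₂,τ₂) ↦ (ξ, τ, τ₁+ξ₁, τ₂-ξ₂)`, whose Jacobian is constant and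
  nonzero (`lintegral_transversal`). It equals a constant times `‖w‖_{L^p} ‖Φ‖_{L^p}²`, which is
  finite because `γ p > 1`.
* **Resonance.** With `κ = max (-2s) 0`, the remaining weight satisfies
  `⟨ξ₁⟩^{-s} ⟨ξ₂⟩^{-s} ⟨ξ⟩^{r-1} ≲ (⟨τ₁+ξ₁⟩ ⟨τ₂-ξ₂⟩ ⟨τ±|ξ|⟩)^κ` (`weight_bound`). For `s ≥ 0` this is
  `⟨ξ⟩ ≲ ⟨ξ₁⟩⟨ξ₂⟩`, since `r - 1 ≤ s`. For `s < 0`, one of `2ξ₁`, `2ξ₂` is a signed sum of the three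
  modulations, because `τ + ξ = (τ₁+ξ₁) + (τ₂-ξ₂) + 2ξ₂` and `τ - ξ = (τ₁+ξ₁) + (τ₂-ξ₂) - 2ξ₁`;
  the other frequency is then removed by `⟨ξ₁⟩ ≲ ⟨ξ⟩⟨ξ₂⟩`.

The condition on `s` says precisely that `κ < 1 - 1/p`, so there is room for `σ < 1` with
`γ := σ - κ > 1/p` and for `ρ > 1/p`, `ε > 0` with `1 - ρ - ε = κ`.
-/

open MeasureTheory

/-- Japanese bracket ⟨x⟩ = (1 + x²)^{1/2}. -/
noncomputable def jap (x : ℝ) : ℝ := Real.sqrt (1 + x ^ 2)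

lemma one_le_jap (x : ℝ) : 1 ≤ jap x := by
  unfold jap
  rw [Real.one_le_sqrt]
  nlinarith [sq_nonneg x]

lemma jap_pos (x : ℝ) : 0 < jap x := lt_of_lt_of_le one_pos (one_le_jap x)

lemma jap_neg (x : ℝ) : jap (-x) = jap x := by simp [jap]

lemma continuous_jap : Continuous jap := by unfold jap; fun_prop

lemma jap_le_jap_two_mul (x : ℝ) : jap x ≤ jap (2 * x) := by
  unfold jap
  apply Real.sqrt_le_sqrt
  nlinarith [sq_nonneg x]

/-- Peetre's inequality (with a non-optimal constant). -/
lemma jap_add_le (x y : ℝ) : jap (x + y) ≤ 2 * (jap x * jap y) := by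
  unfold jap
  rw [← Real.sqrt_mul (by positivity)]
  apply Real.sqrt_le_iff.2 ⟨by positivity, ?_⟩
  rw [mul_pow, Real.sq_sqrt (by positivity)]
  nlinarith [sq_nonneg (x - y), mul_nonneg (sq_nonneg x) (sq_nonneg y), sq_nonneg x, sq_nonneg y]

lemma jap_add_add_le (x y z : ℝ) : jap (x + y + z) ≤ 4 * (jap x * jap y * jap z) := by
  have h1 := jap_add_le (x + y) z
  have h2 := mul_le_mul_of_nonneg_right (jap_add_le x y) (jap_pos z).le
  linarith

/-- The resonance inequality: the product of the two input frequencies is controlled by the output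
frequency and the three modulations. -/
lemma resonance (x₁ t₁ x₂ t₂ sgn : ℝ) (hsgn : sgn = 1 ∨ sgn = -1) :
    jap x₁ * jap x₂ ≤ 32 * (jap (x₁ + x₂) *
      (jap (t₁ + x₁) * jap (t₂ - x₂) * jap (t₁ + t₂ + sgn * |x₁ + x₂|)) ^ 2) := by
  set N := jap (t₁ + x₁) * jap (t₂ - x₂) * jap (t₁ + t₂ + sgn * |x₁ + x₂|) with hN
  have hX := jap_pos (x₁ + x₂)
  have p1 := jap_pos x₁
  have p2 := jap_pos x₂
  have hcase : sgn * |x₁ + x₂| = x₁ + x₂ ∨ sgn * |x₁ + x₂| = -(x₁ + x₂) := by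
    rcases hsgn with rfl | rfl <;> rcases abs_choice (x₁ + x₂) with h | h <;> simp [h]
  have key : jap x₁ ≤ 4 * N ∨ jap x₂ ≤ 4 * N := by
    rcases hcase with h | h
    · right
      refine (jap_le_jap_two_mul x₂).trans ?_
      have := jap_add_add_le (-(t₁ + x₁)) (-(t₂ - x₂)) (t₁ + t₂ + sgn * |x₁ + x₂|)
      rw [jap_neg, jap_neg, ← hN] at this
      refine le_of_eq_of_le (congrArg jap ?_) this
      rw [h]; ring
    · left
      refine (jap_le_jap_two_mul x₁).trans ?_
      have := jap_add_add_le (t₁ + x₁) (t₂ - x₂) (-(t₁ + t₂ + sgn * |x₁ + x₂|))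
      rw [jap_neg, ← hN] at this
      refine le_of_eq_of_le (congrArg jap ?_) this
      rw [h]; ring
  rcases key with h | h
  · have h2 : jap x₂ ≤ 2 * (jap (x₁ + x₂) * jap x₁) := by
      have := jap_add_le (x₁ + x₂) (-x₁)
      rw [jap_neg] at this
      convert this using 2
      ring
    calc jap x₁ * jap x₂ ≤ jap x₁ * (2 * (jap (x₁ + x₂) * jap x₁)) := by gcongr
      _ = 2 * jap (x₁ + x₂) * jap x₁ ^ 2 := by ring
      _ ≤ 2 * jap (x₁ + x₂) * (4 * N) ^ 2 := by gcongr
      _ = _ := by ring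
  · have h2 : jap x₁ ≤ 2 * (jap (x₁ + x₂) * jap x₂) := by
      have := jap_add_le (x₁ + x₂) (-x₂)
      rw [jap_neg] at this
      convert this using 2
      ring
    calc jap x₁ * jap x₂ ≤ (2 * (jap (x₁ + x₂) * jap x₂)) * jap x₂ := by gcongr
      _ = 2 * jap (x₁ + x₂) * jap x₂ ^ 2 := by ring
      _ ≤ 2 * jap (x₁ + x₂) * (4 * N) ^ 2 := by gcongr
      _ = _ := by ring

/-- All frequency weights are absorbed by a power `κ` of the three modulations. -/
lemma weight_bound (s r x₁ t₁ x₂ t₂ sgn : ℝ) (hsgn : sgn = 1 ∨ sgn = -1) (hr : r ≤ 1 + s) :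
    1 ≤ (32 : ℝ) ^ |s| * (jap x₁ ^ s * jap x₂ ^ s * jap (x₁ + x₂) ^ (1 - r) *
      (jap (t₁ + x₁) * jap (t₂ - x₂) * jap (t₁ + t₂ + sgn * |x₁ + x₂|)) ^ (max (-2 * s) 0)) := by
  have hX := jap_pos (x₁ + x₂)
  have p1 := jap_pos x₁
  have p2 := jap_pos x₂
  have hmono : jap (x₁ + x₂) ^ (-s) ≤ jap (x₁ + x₂) ^ (1 - r) :=
    Real.rpow_le_rpow_of_exponent_le (one_le_jap _) (by linarith)
  have hres := resonance x₁ t₁ x₂ t₂ sgn hsgn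
  have hNpos : 0 < jap (t₁ + x₁) * jap (t₂ - x₂) * jap (t₁ + t₂ + sgn * |x₁ + x₂|) :=
    mul_pos (mul_pos (jap_pos _) (jap_pos _)) (jap_pos _)
  set N := jap (t₁ + x₁) * jap (t₂ - x₂) * jap (t₁ + t₂ + sgn * |x₁ + x₂|)
  rcases le_or_gt 0 s with h | h
  · rw [max_eq_right (by linarith), Real.rpow_zero, mul_one, abs_of_nonneg h]
    have h1 : jap (x₁ + x₂) ≤ 32 * (jap x₁ * jap x₂) := by
      have := jap_add_le x₁ x₂
      nlinarith [mul_pos p1 p2]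
    have h2 := Real.rpow_le_rpow hX.le h1 h
    rw [Real.mul_rpow (by norm_num) (by positivity), Real.mul_rpow p1.le p2.le] at h2
    calc (1 : ℝ) = jap (x₁ + x₂) ^ s * jap (x₁ + x₂) ^ (-s) := by
          rw [← Real.rpow_add hX]; simp
      _ ≤ (32 ^ s * (jap x₁ ^ s * jap x₂ ^ s)) * jap (x₁ + x₂) ^ (1 - r) := by gcongr
      _ = _ := by ring
  · rw [max_eq_left (by linarith), abs_of_neg h]
    have h2 := Real.rpow_le_rpow (by positivity) hres (by linarith : 0 ≤ -s)
    rw [Real.mul_rpow p1.le p2.le, Real.mul_rpow (by norm_num) (by positivity),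
      Real.mul_rpow hX.le (by positivity), ← Real.rpow_natCast N 2, ← Real.rpow_mul hNpos.le] at h2
    have e : ((2 : ℕ) : ℝ) * -s = -2 * s := by push_cast; ring
    rw [e] at h2
    calc (1 : ℝ) = (jap x₁ ^ s * jap x₂ ^ s) * (jap x₁ ^ (-s) * jap x₂ ^ (-s)) := by
          rw [mul_mul_mul_comm, ← Real.rpow_add p1, ← Real.rpow_add p2]; simp
      _ ≤ (jap x₁ ^ s * jap x₂ ^ s) * (32 ^ (-s) * (jap (x₁ + x₂) ^ (-s) * N ^ (-2 * s))) := by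
          gcongr
      _ ≤ (jap x₁ ^ s * jap x₂ ^ s) * (32 ^ (-s) * (jap (x₁ + x₂) ^ (1 - r) * N ^ (-2 * s))) := by
          gcongr
      _ = _ := by ring

lemma lintegral_affine (F : ℝ → ENNReal) (hF : Measurable F) (k : ℝ) :
    ∫⁻ x, F (k + 2 * x) = ENNReal.ofReal (1 / 2) * ∫⁻ x, F x := by
  have h := Real.map_volume_mul_left (a := 2) two_ne_zero
  have h1 : ∫⁻ x, F (k + 2 * x) = ∫⁻ y, F (k + y) ∂(Measure.map (fun x : ℝ => 2 * x) volume) := by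
    rw [lintegral_map (by fun_prop) (by fun_prop)]
  rw [h1, h, lintegral_smul_measure, lintegral_add_left_eq_self]
  norm_num

/-- The linear change of variables `(z₁, z₂) ↦ (z₁ + z₂, τ₁ + ξ₁, τ₂ - ξ₂)` on `ℝ⁴`, with `z₁ = (ξ₁, τ₁)`
and `z₂ = (ξ₂, τ₂)`; its determinant is `±2`. -/
lemma lintegral_transversal (W : ℝ × ℝ → ENNReal) (F : ℝ → ENNReal) (hW : Measurable W)
    (hF : Measurable F) :
    ∫⁻ z : (ℝ × ℝ) × (ℝ × ℝ), W (z.1 + z.2) * (F (z.1.2 + z.1.1) * F (z.2.2 - z.2.1)) =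
      ENNReal.ofReal (1 / 2) * (∫⁻ x, F x) * (∫⁻ x, F x) * ∫⁻ u, W u := by
  have inner : ∀ u : ℝ × ℝ, ∫⁻ z : ℝ × ℝ, F (z.2 + z.1) * F ((u - z).2 - (u - z).1) =
      ENNReal.ofReal (1 / 2) * (∫⁻ x, F x) * (∫⁻ x, F x) := by
    intro u
    rw [Measure.volume_eq_prod, lintegral_prod _ (by fun_prop)]
    calc ∫⁻ x : ℝ, ∫⁻ t : ℝ, F (t + x) * F ((u - (x, t)).2 - (u - (x, t)).1)
        = ∫⁻ x : ℝ, ∫⁻ a : ℝ, F a * F ((u.2 - u.1 - a) + 2 * x) := by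
          congr 1; ext x
          rw [← lintegral_add_right_eq_self (fun a => F a * F ((u.2 - u.1 - a) + 2 * x)) x]
          congr 1; ext t
          congr 2
          simp only [Prod.fst_sub, Prod.snd_sub]
          ring
      _ = ∫⁻ a : ℝ, ∫⁻ x : ℝ, F a * F ((u.2 - u.1 - a) + 2 * x) :=
          lintegral_lintegral_swap (by fun_prop)
      _ = ∫⁻ a : ℝ, F a * (ENNReal.ofReal (1 / 2) * ∫⁻ x, F x) := by
          congr 1; ext a
          rw [lintegral_const_mul _ (by fun_prop), lintegral_affine F hF]
      _ = _ := by
          rw [lintegral_mul_const _ hF]; ring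
  rw [Measure.volume_eq_prod, lintegral_prod _ (by fun_prop)]
  calc ∫⁻ z₁ : ℝ × ℝ, ∫⁻ z₂ : ℝ × ℝ, W (z₁ + z₂) * (F (z₁.2 + z₁.1) * F (z₂.2 - z₂.1))
      = ∫⁻ z₁ : ℝ × ℝ, ∫⁻ u : ℝ × ℝ,
          W u * (F (z₁.2 + z₁.1) * F ((u - z₁).2 - (u - z₁).1)) := by
        congr 1; ext z₁
        rw [← lintegral_sub_right_eq_self _ z₁]
        simp only [add_sub_cancel]
    _ = ∫⁻ u : ℝ × ℝ, ∫⁻ z₁ : ℝ × ℝ,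
          W u * (F (z₁.2 + z₁.1) * F ((u - z₁).2 - (u - z₁).1)) :=
        lintegral_lintegral_swap (by fun_prop)
    _ = ∫⁻ u : ℝ × ℝ, W u * (ENNReal.ofReal (1 / 2) * (∫⁻ x, F x) * (∫⁻ x, F x)) := by
        congr 1; ext u
        rw [lintegral_const_mul _ (by fun_prop), inner]
    _ = _ := by
        rw [lintegral_mul_const _ hW]; ring

/-- The bilinear estimate with only the two input modulations as weights. -/
lemma transversal_holder {p p' : ℝ} (hc : p'.HolderConjugate p) (v₁ v₂ w : ℝ × ℝ → ENNReal)
    (F : ℝ → ENNReal) (h₁ : Measurable v₁) (h₂ : Measurable v₂) (hw : Measurable w)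
    (hF : Measurable F) :
    ∫⁻ z : (ℝ × ℝ) × (ℝ × ℝ), (v₁ z.1 * v₂ (-z.2)) *
        (w (z.1 + z.2) * (F (z.1.2 + z.1.1) * F (z.2.2 - z.2.1))) ≤
      (ENNReal.ofReal (1 / 2) * (∫⁻ x, F x ^ p) * (∫⁻ x, F x ^ p)) ^ (1 / p) *
        (∫⁻ x, v₁ x ^ p') ^ (1 / p') * (∫⁻ x, v₂ x ^ p') ^ (1 / p') * (∫⁻ x, w x ^ p) ^ (1 / p) := by
  have hp0 : 0 ≤ p := hc.symm.nonneg
  have hp0' : 0 ≤ p' := hc.nonneg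
  refine (ENNReal.lintegral_mul_le_Lp_mul_Lq _ hc (f := fun z : (ℝ × ℝ) × (ℝ × ℝ) =>
    v₁ z.1 * v₂ (-z.2)) (g := fun z => w (z.1 + z.2) * (F (z.1.2 + z.1.1) * F (z.2.2 - z.2.1)))
    (by fun_prop) (by fun_prop)).trans_eq ?_
  simp only [ENNReal.mul_rpow_of_nonneg _ _ hp0, ENNReal.mul_rpow_of_nonneg _ _ hp0']
  rw [lintegral_transversal (fun u => w u ^ p) (fun x => F x ^ p) (by fun_prop) (by fun_prop)]
  have e : ∫⁻ z : (ℝ × ℝ) × (ℝ × ℝ), v₁ z.1 ^ p' * v₂ (-z.2) ^ p' =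
      (∫⁻ x, v₁ x ^ p') * ∫⁻ x, v₂ x ^ p' := by
    rw [Measure.volume_eq_prod, lintegral_prod_mul (f := fun x => v₁ x ^ p')
      (g := fun x => v₂ (-x) ^ p') (by fun_prop) (by fun_prop)]
    congr 1
    exact lintegral_neg_eq_self (fun x => v₂ x ^ p')
  rw [e, ENNReal.mul_rpow_of_nonneg _ _ (by positivity : 0 ≤ 1 / p'),
    ENNReal.mul_rpow_of_nonneg _ (∫⁻ x, w x ^ p) (by positivity : 0 ≤ 1 / p)]
  ring

lemma lintegral_jap_ne_top {p γ : ℝ} (hp : 0 < p) (hγ : 1 / p < γ) :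
    ∫⁻ x : ℝ, ENNReal.ofReal (jap x ^ (-γ)) ^ p ≠ ⊤ := by
  have h1 : 1 < γ * p := by rwa [div_lt_iff₀ hp] at hγ
  have hi := integrable_rpow_neg_one_add_norm_sq (E := ℝ) (μ := volume) (r := γ * p) (by simpa)
  have := hi.lintegral_lt_top.ne
  convert this using 3 with x
  rw [ENNReal.ofReal_rpow_of_nonneg (Real.rpow_nonneg (jap_pos x).le _) hp.le,
    ← Real.rpow_mul (jap_pos x).le, jap, Real.sqrt_eq_rpow, ← Real.rpow_mul (by positivity)]
  simp only [Real.norm_eq_abs, sq_abs]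
  congr 2
  ring

/-- Estimate (**1), dual Fourier-side formulation: wave-part bilinear estimate
for ⟨βP₊ψ, P₋ψ′⟩ in the 1D Dirac–Klein–Gordon system. -/
theorem stmt_12 (p p' s r : ℝ) (hp : 1 < p) (hp2 : p ≤ 2) (hpp' : 1 / p + 1 / p' = 1)
    (hs : s > -(1 / 2) + 1 / (2 * p)) (hrs : r ≥ |s|) (hr1 : r > 2 / p - 1) (hr2 : r ≤ 1 + s) :
    ∃ ε σ ρ : ℝ, 0 < ε ∧ 1 / p < σ ∧ σ < 1 ∧ 1 / p < ρ ∧ ρ < 1 ∧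
      ∃ C : ℝ, 0 < C ∧ ∀ sgn : ℝ, (sgn = 1 ∨ sgn = -1) →
        ∀ v₁ v₂ w : ℝ × ℝ → ENNReal, Measurable v₁ → Measurable v₂ → Measurable w →
          (∫⁻ z : (ℝ × ℝ) × (ℝ × ℝ),
            (v₁ z.1 * v₂ (-z.2.1, -z.2.2) * w (z.1.1 + z.2.1, z.1.2 + z.2.2)) /
              ENNReal.ofReal (jap z.1.1 ^ s * jap (z.1.2 + z.1.1) ^ σ *
                jap z.2.1 ^ s * jap (z.2.2 - z.2.1) ^ σ *
                jap (z.1.1 + z.2.1) ^ (1 - r) *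
                jap (z.1.2 + z.2.2 + sgn * |z.1.1 + z.2.1|) ^ (1 - ρ - ε))) ≤
            ENNReal.ofReal C *
              (∫⁻ x : ℝ × ℝ, v₁ x ^ p') ^ (1 / p') *
              (∫⁻ x : ℝ × ℝ, v₂ x ^ p') ^ (1 / p') *
              (∫⁻ x : ℝ × ℝ, w x ^ p) ^ (1 / p) := by
  have hp0 : 0 < p := by linarith
  have hpi : 1 / p < 1 := by rw [div_lt_one hp0]; exact hp
  have hc : p'.HolderConjugate p := by
    have hp'0 : 0 < p' := by
      have : 0 < 1 / p' := by linarith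
      exact one_div_pos.1 this
    refine Real.HolderTriple.mk ?_ hp'0 hp0
    simp only [one_div] at hpp'
    rw [inv_one]; linarith
  set κ := max (-2 * s) 0 with hκ
  have hκ0 : 0 ≤ κ := le_max_right _ _
  have hκ1 : κ < 1 - 1 / p := by
    have e : 1 / (2 * p) = (1 / p) / 2 := by rw [one_div, mul_inv]; ring
    rw [e] at hs
    exact max_lt (by linarith) (by linarith)
  set σ := (1 / p + κ + 1) / 2 with hσ
  have hγ : 1 / p < σ - κ := by linarith
  -- with this choice of `ε` and `ρ = 1/p + ε` one has `1 - ρ - ε = κ`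
  set ε := (1 - 1 / p - κ) / 2 with hε
  set F : ℝ → ENNReal := fun x => ENNReal.ofReal (jap x ^ (-(σ - κ))) with hFdef
  have hF : Measurable F := by
    have := continuous_jap.measurable
    fun_prop
  set A := (ENNReal.ofReal (1 / 2) * (∫⁻ x, F x ^ p) * (∫⁻ x, F x ^ p)) ^ (1 / p) with hA
  have hAtop : A ≠ ⊤ := by
    have := lintegral_jap_ne_top hp0 hγ
    refine ENNReal.rpow_ne_top_of_nonneg (by positivity) ?_
    exact ENNReal.mul_ne_top (ENNReal.mul_ne_top ENNReal.ofReal_ne_top this) this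
  have hC0 : (0 : ℝ) < 32 ^ |s| := by positivity
  refine ⟨ε, σ, 1 / p + ε, by linarith, by linarith, by linarith, by linarith, by linarith,
    32 ^ |s| * (A.toReal + 1), by positivity, ?_⟩
  intro sgn hsgn v₁ v₂ w h₁ h₂ hw
  have hexp : 1 - (1 / p + ε) - ε = κ := by rw [hε]; ring
  rw [hexp]
  calc _ ≤ ∫⁻ z : (ℝ × ℝ) × (ℝ × ℝ), ENNReal.ofReal (32 ^ |s|) * ((v₁ z.1 * v₂ (-z.2)) *
        (w (z.1 + z.2) * (F (z.1.2 + z.1.1) * F (z.2.2 - z.2.1)))) := by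
        refine lintegral_mono fun z => ?_
        obtain ⟨⟨x₁, t₁⟩, ⟨x₂, t₂⟩⟩ := z
        simp only [hFdef, Prod.mk_add_mk, Prod.neg_mk]
        have hwb := weight_bound s r x₁ t₁ x₂ t₂ sgn hsgn hr2
        rw [← hκ] at hwb
        have pa := jap_pos (t₁ + x₁)
        have pb := jap_pos (t₂ - x₂)
        have pT := jap_pos (t₁ + t₂ + sgn * |x₁ + x₂|)
        have p1 := jap_pos x₁
        have p2 := jap_pos x₂
        have pX := jap_pos (x₁ + x₂)
        rw [Real.mul_rpow (by positivity) pT.le, Real.mul_rpow pa.le pb.le] at hwb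
        set a := jap (t₁ + x₁)
        set b := jap (t₂ - x₂)
        set T := jap (t₁ + t₂ + sgn * |x₁ + x₂|)
        set y₁ := jap x₁
        set y₂ := jap x₂
        set X := jap (x₁ + x₂)
        have hD : 0 < y₁ ^ s * a ^ σ * y₂ ^ s * b ^ σ * X ^ (1 - r) * T ^ κ := by positivity
        have hle : (y₁ ^ s * a ^ σ * y₂ ^ s * b ^ σ * X ^ (1 - r) * T ^ κ)⁻¹ ≤
            32 ^ |s| * (a ^ (-(σ - κ)) * b ^ (-(σ - κ))) := by
          rw [inv_le_iff_one_le_mul₀ hD]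
          refine hwb.trans_eq ?_
          have ea : a ^ κ = a ^ (-(σ - κ)) * a ^ σ := by
            rw [← Real.rpow_add pa]; congr 1; ring
          have eb : b ^ κ = b ^ (-(σ - κ)) * b ^ σ := by
            rw [← Real.rpow_add pb]; congr 1; ring
          rw [ea, eb]; ring
        rw [div_eq_mul_inv, ← ENNReal.ofReal_inv_of_pos hD]
        calc _ ≤ v₁ (x₁, t₁) * v₂ (-x₂, -t₂) * w (x₁ + x₂, t₁ + t₂) *
              ENNReal.ofReal (32 ^ |s| * (a ^ (-(σ - κ)) * b ^ (-(σ - κ)))) := by gcongr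
          _ = _ := by
              rw [ENNReal.ofReal_mul hC0.le, ENNReal.ofReal_mul (by positivity)]; ring
    _ = ENNReal.ofReal (32 ^ |s|) * ∫⁻ z : (ℝ × ℝ) × (ℝ × ℝ), (v₁ z.1 * v₂ (-z.2)) *
        (w (z.1 + z.2) * (F (z.1.2 + z.1.1) * F (z.2.2 - z.2.1))) :=
        lintegral_const_mul _ (by fun_prop)
    _ ≤ ENNReal.ofReal (32 ^ |s|) * (A *
        (∫⁻ x, v₁ x ^ p') ^ (1 / p') * (∫⁻ x, v₂ x ^ p') ^ (1 / p') *
          (∫⁻ x, w x ^ p) ^ (1 / p)) := by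
        gcongr
        exact transversal_holder hc v₁ v₂ w F h₁ h₂ hw hF
    _ ≤ ENNReal.ofReal (32 ^ |s|) * (ENNReal.ofReal (A.toReal + 1) *
        (∫⁻ x, v₁ x ^ p') ^ (1 / p') * (∫⁻ x, v₂ x ^ p') ^ (1 / p') *
          (∫⁻ x, w x ^ p) ^ (1 / p)) := by
        have hA1 : A ≤ ENNReal.ofReal (A.toReal + 1) := by
          conv_lhs => rw [← ENNReal.ofReal_toReal hAtop]
          exact ENNReal.ofReal_le_ofReal (by linarith)
        gcongr
    _ = _ := by rw [ENNReal.ofReal_mul hC0.le]; ring
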